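/- Let Ω ⊂ ℝⁿ (n ≥ 2) be a bounded polyhedral domain with singular set S ≠ ∅ and η(x) = dist(x, S). Then there exists a constant κ > 0, depending only on Ω, such that for every function u : ℝⁿ → ℝ that is continuous on the closure of Ω, continuously differentiable on Ω, and satisfies u = 0 on ∂Ω, one has ∫_Ω u(x)²/η(x)² dx + ∫_Ω ‖∇u(x)‖² dx ≤ κ ∫_Ω ‖∇u(x)‖² dx (an inequality in the extended nonnegative reals). -/

import Mathlib

open MeasureTheory Metric Set
open scoped RealInnerProductSpace ENNReal

/-- `H` is an affine hyperplane in `ℝⁿ`. -/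
def IsAffineHyperplane {n : ℕ} (H : Set (EuclideanSpace ℝ (Fin n))) : Prop :=
  ∃ (v : EuclideanSpace ℝ (Fin n)) (c : ℝ), v ≠ 0 ∧ H = {x | ⟪v, x⟫ = c}

/-- `Ω` is a bounded polyhedral domain with boundary contained in the union of the minimal
finite family `𝓗` of affine hyperplanes. -/
structure IsPolyhedralDomain {n : ℕ} (Ω : Set (EuclideanSpace ℝ (Fin n)))
    (𝓗 : Finset (Set (EuclideanSpace ℝ (Fin n)))) : Prop where
  isOpen : IsOpen Ω
  isBounded : Bornology.IsBounded Ω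
  frontier_closure : frontier Ω = frontier (closure Ω)
  hyperplane : ∀ H ∈ 𝓗, IsAffineHyperplane H
  subset_union : frontier Ω ⊆ ⋃ H ∈ 𝓗, H
  minimal : ∀ 𝓗' ⊂ 𝓗, ¬ frontier Ω ⊆ ⋃ H ∈ 𝓗', H

/-- The set of singular boundary points: boundary points lying on at least two
distinct hyperplanes of the family `𝓗`. -/
def polySingularSet {n : ℕ} (Ω : Set (EuclideanSpace ℝ (Fin n)))
    (𝓗 : Finset (Set (EuclideanSpace ℝ (Fin n)))) : Set (EuclideanSpace ℝ (Fin n)) :=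
  {x | x ∈ frontier Ω ∧ ∃ H₁ ∈ 𝓗, ∃ H₂ ∈ 𝓗, H₁ ≠ H₂ ∧ x ∈ H₁ ∧ x ∈ H₂}

/-!
If `u` vanishes at the end of a segment of length `d`, a weighted Cauchy–Schwarz inequality bounds
`u² / d²` at its start by a weighted integral of the squared derivative of `u` along the segment.
Integrating over `Ω`, and using Fubini and translation invariance, one gets
`∫ u² / τ² ≤ 4 ∫ (∂ᵥ u)²`, where `τ x` is the time at which the ray from `x` with velocity `v`
leaves `Ω`.

Finitely many velocities suffice to make the smallest exit time comparable to the distance to the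
boundary. The hyperplanes cut space into finitely many open convex cells, each inside or outside
`Ω`, and every boundary point lies in the closure of a cell `P` outside `Ω`. Fix a ball in `P` with
centre `z`. By convexity, a point near a boundary point `q` that moves with velocity `z - q` enters
`P` within a time proportional to its distance from `closure P`; compactness of the boundary leaves
finitely many pairs `(P, q)`. Hence the Hardy inequality holds for the distance to the whole
boundary, and the singular set is farther away.
-/

open scoped NNReal

section Integrals

theorem lintegral_Ioo_sub_rpow {a d : ℝ} (ha : -1 < a) (hd : 0 ≤ d) :
    ∫⁻ s in Ioo 0 d, ENNReal.ofReal ((d - s) ^ a) = ENNReal.ofReal (d ^ (a + 1) / (a + 1)) := by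
  have hint : IntervalIntegrable (fun s : ℝ ↦ (d - s) ^ a) volume 0 d := by
    simpa using
      (intervalIntegral.intervalIntegrable_rpow' (a := d) (b := 0) ha).comp_sub_left d
  have hvalue : ∫ s in 0..d, (d - s) ^ a = d ^ (a + 1) / (a + 1) := by
    rw [intervalIntegral.integral_comp_sub_left (fun t ↦ t ^ a), sub_self, sub_zero,
      integral_rpow (.inl ha), Real.zero_rpow (by linarith), sub_zero]
  rw [← hvalue, intervalIntegral.integral_of_le hd, integral_Ioc_eq_integral_Ioo,
    ofReal_integral_eq_lintegral_ofReal
      ((intervalIntegrable_iff_integrableOn_Ioo_of_le hd).1 hint)]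
  filter_upwards [self_mem_ae_restrict measurableSet_Ioo] with s hs
  exact Real.rpow_nonneg (sub_pos.2 hs.2).le a

theorem lintegral_Ioi_add_rpow {a c : ℝ} (ha : a < -1) (hc : 0 < c) :
    ∫⁻ s in Ioi 0, ENNReal.ofReal ((c + s) ^ a) = ENNReal.ofReal (-c ^ (a + 1) / (a + 1)) := by
  have hshift : ∫⁻ s in Ioi 0, ENNReal.ofReal ((c + s) ^ a) =
      ∫⁻ t in Ioi c, ENNReal.ofReal (t ^ a) := by
    simpa using (measurePreserving_add_left volume c).setLIntegral_comp_preimage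
      (measurableSet_Ioi (a := c)) (f := fun t ↦ ENNReal.ofReal (t ^ a)) (by fun_prop)
  rw [hshift, ← integral_Ioi_rpow_of_lt ha hc,
    ofReal_integral_eq_lintegral_ofReal (integrableOn_Ioi_rpow_of_lt ha hc)]
  filter_upwards [self_mem_ae_restrict measurableSet_Ioi] with t ht
  exact Real.rpow_nonneg (hc.trans ht).le a

theorem sq_lintegral_le_lintegral_inv_mul_lintegral_mul_sq {α : Type*} [MeasurableSpace α]
    {μ : Measure α} {w f : α → ℝ≥0∞} (hw : AEMeasurable w μ) (hf : AEMeasurable f μ)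
    (hw₀ : ∀ᵐ x ∂μ, w x ≠ 0) (hw_top : ∀ᵐ x ∂μ, w x ≠ ∞) :
    (∫⁻ x, f x ∂μ) ^ 2 ≤ (∫⁻ x, (w x)⁻¹ ∂μ) * ∫⁻ x, w x * f x ^ 2 ∂μ := by
  have hsplit : ∫⁻ x, f x ∂μ =
      ∫⁻ x, ((fun x ↦ w⁻¹ x ^ (1 / 2 : ℝ)) * ((fun x ↦ w x ^ (1 / 2 : ℝ)) * f)) x ∂μ := by
    refine lintegral_congr_ae ?_
    filter_upwards [hw₀, hw_top] with x h₀ h_top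
    simp only [Pi.mul_apply, Pi.inv_apply]
    rw [← mul_assoc, ← ENNReal.mul_rpow_of_nonneg _ _ (by norm_num),
      ENNReal.inv_mul_cancel h₀ h_top, ENNReal.one_rpow, one_mul]
  have holder := ENNReal.lintegral_mul_le_Lp_mul_Lq μ Real.HolderConjugate.two_two
    (hw.inv.pow_const (1 / 2 : ℝ)) ((hw.pow_const (1 / 2 : ℝ)).mul hf)
  rw [← hsplit, ← ENNReal.mul_rpow_of_nonneg _ _ (by norm_num), one_div,
    ENNReal.le_rpow_inv_iff two_pos] at holder
  have sq_rpow_half (y : ℝ≥0∞) : (y ^ (2⁻¹ : ℝ)) ^ 2 = y := by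
    rw [← ENNReal.rpow_natCast, ← ENNReal.rpow_mul]
    norm_num
  simpa only [Pi.mul_apply, Pi.inv_apply, ENNReal.mul_rpow_of_nonneg _ _ zero_le_two,
    ENNReal.rpow_two, sq_rpow_half] using holder

theorem enorm_sub_le_lintegral_enorm_deriv {F : Type*} [NormedAddCommGroup F] [NormedSpace ℝ F]
    [CompleteSpace F] {φ : ℝ → F} {a b : ℝ} (hab : a ≤ b) (hφ : ContinuousOn φ (Icc a b))
    (hφ' : DifferentiableOn ℝ φ (Ioo a b)) :
    ‖φ b - φ a‖ₑ ≤ ∫⁻ s in Ioo a b, ‖deriv φ s‖ₑ := by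
  by_cases hfin : ∫⁻ s in Ioo a b, ‖deriv φ s‖ₑ = ∞
  · exact hfin ▸ le_top
  have hint : IntegrableOn (deriv φ) (Ioo a b) :=
    ⟨aestronglyMeasurable_deriv φ _, lt_top_iff_ne_top.2 hfin⟩
  have hftc : ∫ s in Ioo a b, deriv φ s = φ b - φ a := by
    rw [← integral_Ioc_eq_integral_Ioo, ← intervalIntegral.integral_of_le hab]
    exact intervalIntegral.integral_eq_sub_of_hasDerivAt_of_le hab hφ
      (fun s hs ↦ (hφ'.differentiableAt (isOpen_Ioo.mem_nhds hs)).hasDerivAt)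
      ((intervalIntegrable_iff_integrableOn_Ioo_of_le hab).2 hint)
  exact hftc ▸ enorm_integral_le_lintegral_enorm _

theorem lintegral_lintegral_add_smul {E : Type*} [AddCommGroup E] [Module ℝ E] [MeasurableSpace E]
    [MeasurableAdd₂ E] [MeasurableSMul₂ ℝ E] (μ : Measure E) [SFinite μ] [μ.IsAddRightInvariant]
    (ν : Measure ℝ) [SFinite ν] (v : E) {G : E → ℝ → ℝ≥0∞} (hG : Measurable (Function.uncurry G)) :
    ∫⁻ x, ∫⁻ s, G (x + s • v) s ∂ν ∂μ = ∫⁻ x, ∫⁻ s, G x s ∂ν ∂μ := by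
  have hshear : Measurable fun z : E × ℝ ↦ (z.1 + z.2 • v, z.2) := by fun_prop
  calc ∫⁻ x, ∫⁻ s, G (x + s • v) s ∂ν ∂μ
      = ∫⁻ s, ∫⁻ x, G (x + s • v) s ∂μ ∂ν :=
        lintegral_lintegral_swap (hG.comp hshear).aemeasurable
    _ = ∫⁻ s, ∫⁻ x, G x s ∂μ ∂ν :=
        lintegral_congr fun s ↦ lintegral_add_right_eq_self (fun x ↦ G x s) (s • v)
    _ = ∫⁻ x, ∫⁻ s, G x s ∂ν ∂μ := (lintegral_lintegral_swap hG.aemeasurable).symm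

end Integrals

section HardyKernel

/-- The weight with which the squared derivative at distance `t` before the end of a segment of
length `d` enters the Hardy bound at the start of that segment. -/
noncomputable def hardyKernel (d t : ℝ) : ℝ≥0∞ :=
  ENNReal.ofReal (2 * d ^ (-(3 / 2) : ℝ)) * ENNReal.ofReal (t ^ (1 / 2 : ℝ))

theorem lintegral_hardyKernel_add {t : ℝ} (ht : 0 < t) :
    ∫⁻ s in Ioi 0, hardyKernel (t + s) t = 4 := by
  simp only [hardyKernel, ENNReal.ofReal_mul zero_le_two]
  rw [lintegral_mul_const _ (by fun_prop), lintegral_const_mul _ (by fun_prop),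
    lintegral_Ioi_add_rpow (by norm_num) ht, ← ENNReal.ofReal_mul zero_le_two,
    ← ENNReal.ofReal_mul' (by positivity)]
  have hcancel : 2 * (-t ^ (-(3 / 2) + 1 : ℝ) / (-(3 / 2) + 1)) * t ^ (1 / 2 : ℝ) = 4 := by
    calc _ = 4 * (t ^ (-(3 / 2) + 1 : ℝ) * t ^ (1 / 2 : ℝ)) := by ring
      _ = 4 := by rw [← Real.rpow_add ht]; norm_num
  rw [hcancel, ENNReal.ofReal_ofNat]

theorem sq_lintegral_Ioo_le {d : ℝ} (hd : 0 ≤ d) {f : ℝ → ℝ≥0∞}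
    (hf : AEMeasurable f (volume.restrict (Ioo 0 d))) :
    (∫⁻ s in Ioo 0 d, f s) ^ 2 ≤ ENNReal.ofReal (2 * d ^ (1 / 2 : ℝ)) *
      ∫⁻ s in Ioo 0 d, ENNReal.ofReal ((d - s) ^ (1 / 2 : ℝ)) * f s ^ 2 := by
  have hinv : ∫⁻ s in Ioo 0 d, (ENNReal.ofReal ((d - s) ^ (1 / 2 : ℝ)))⁻¹ =
      ENNReal.ofReal (2 * d ^ (1 / 2 : ℝ)) := by
    calc ∫⁻ s in Ioo 0 d, (ENNReal.ofReal ((d - s) ^ (1 / 2 : ℝ)))⁻¹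
        = ∫⁻ s in Ioo 0 d, ENNReal.ofReal ((d - s) ^ (-(1 / 2) : ℝ)) :=
          setLIntegral_congr_fun measurableSet_Ioo fun s hs ↦ by
            have hpos : 0 < d - s := sub_pos.2 hs.2
            rw [← ENNReal.ofReal_inv_of_pos (by positivity), ← Real.rpow_neg hpos.le]
      _ = ENNReal.ofReal (2 * d ^ (1 / 2 : ℝ)) := by
          rw [lintegral_Ioo_sub_rpow (by norm_num) hd]
          congr 1
          norm_num
          ring
  rw [← hinv]
  refine sq_lintegral_le_lintegral_inv_mul_lintegral_mul_sq (by fun_prop) hf ?_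
    (.of_forall fun _ ↦ ENNReal.ofReal_ne_top)
  filter_upwards [self_mem_ae_restrict measurableSet_Ioo] with s hs
  exact (ENNReal.ofReal_pos.2 (Real.rpow_pos_of_pos (sub_pos.2 hs.2) _)).ne'

theorem sq_enorm_div_le_lintegral_hardyKernel {F : Type*} [NormedAddCommGroup F] [NormedSpace ℝ F]
    [CompleteSpace F] {φ : ℝ → F} {d : ℝ} (hd : 0 < d) (hφ : ContinuousOn φ (Icc 0 d))
    (hφ' : DifferentiableOn ℝ φ (Ioo 0 d)) (hφd : φ d = 0) :
    ‖φ 0‖ₑ ^ 2 / ENNReal.ofReal d ^ 2 ≤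
      ∫⁻ s in Ioo 0 d, hardyKernel d (d - s) * ‖deriv φ s‖ₑ ^ 2 := by
  set w : ℝ → ℝ≥0∞ := fun s ↦ ENNReal.ofReal ((d - s) ^ (1 / 2 : ℝ)) with hw
  have hderiv : Measurable fun s ↦ ‖deriv φ s‖ₑ := (stronglyMeasurable_deriv φ).enorm
  have hφ₀ : ‖φ 0‖ₑ ≤ ∫⁻ s in Ioo 0 d, ‖deriv φ s‖ₑ := by
    simpa [hφd] using enorm_sub_le_lintegral_enorm_deriv hd.le hφ hφ'
  have hconst : ENNReal.ofReal (2 * d ^ (1 / 2 : ℝ)) / ENNReal.ofReal d ^ 2 =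
      ENNReal.ofReal (2 * d ^ (-(3 / 2) : ℝ)) := by
    rw [← ENNReal.ofReal_pow hd.le, ← ENNReal.ofReal_div_of_pos (by positivity), mul_div_assoc,
      ← Real.rpow_natCast, ← Real.rpow_sub hd]
    norm_num
  calc ‖φ 0‖ₑ ^ 2 / ENNReal.ofReal d ^ 2
      ≤ (∫⁻ s in Ioo 0 d, ‖deriv φ s‖ₑ) ^ 2 / ENNReal.ofReal d ^ 2 := by gcongr
    _ ≤ ENNReal.ofReal (2 * d ^ (1 / 2 : ℝ)) * (∫⁻ s in Ioo 0 d, w s * ‖deriv φ s‖ₑ ^ 2) /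
          ENNReal.ofReal d ^ 2 := by
        gcongr
        exact sq_lintegral_Ioo_le hd.le hderiv.aemeasurable
    _ = ENNReal.ofReal (2 * d ^ (-(3 / 2) : ℝ)) * ∫⁻ s in Ioo 0 d, w s * ‖deriv φ s‖ₑ ^ 2 := by
        rw [ENNReal.mul_div_right_comm, hconst]
    _ = ∫⁻ s in Ioo 0 d, hardyKernel d (d - s) * ‖deriv φ s‖ₑ ^ 2 := by
        rw [← lintegral_const_mul _ (by fun_prop)]
        simp only [hardyKernel, hw, mul_assoc]

end HardyKernel

section ExitTime

/-- The time at which the ray from `x` with velocity `v` first leaves `Ω`. It is `0` if `x ∉ Ω`, and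
also, as a junk value, if the ray never leaves `Ω`. -/
noncomputable def exitTime {E : Type*} [AddCommGroup E] [Module ℝ E] (Ω : Set E) (v x : E) : ℝ :=
  sInf {s | 0 ≤ s ∧ x + s • v ∉ Ω}

section Module

variable {E : Type*} [AddCommGroup E] [Module ℝ E] {Ω : Set E} {v x : E} {s : ℝ}

theorem exitTime_nonneg : 0 ≤ exitTime Ω v x :=
  Real.sInf_nonneg fun _ h ↦ h.1

theorem exitTime_le (hs : 0 ≤ s) (h : x + s • v ∉ Ω) : exitTime Ω v x ≤ s :=
  csInf_le ⟨0, fun _ h ↦ h.1⟩ ⟨hs, h⟩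

theorem add_smul_mem_of_lt_exitTime (hs : 0 ≤ s) (h : s < exitTime Ω v x) : x + s • v ∈ Ω :=
  not_imp_comm.1 (exitTime_le hs) h.not_ge

end Module

variable {E : Type*} [NormedAddCommGroup E] [NormedSpace ℝ E] {Ω : Set E} {v x : E} {s : ℝ}

theorem exists_add_smul_notMem_of_isBounded (hb : Bornology.IsBounded Ω) (hv : v ≠ 0)
    (x : E) : ∃ s : ℝ, 0 ≤ s ∧ x + s • v ∉ Ω := by
  by_contra! hray
  have hx : x ∈ Ω := by simpa using hray 0 le_rfl
  have hv' : 0 < ‖v‖ := norm_pos_iff.2 hv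
  have hs : 0 ≤ diam Ω / ‖v‖ + 1 := add_nonneg (div_nonneg diam_nonneg hv'.le) zero_le_one
  have hdist := dist_le_diam_of_mem hb hx (hray _ hs)
  rw [dist_self_add_right, norm_smul, Real.norm_of_nonneg hs, add_mul, div_mul_cancel₀ _ hv'.ne',
    one_mul] at hdist
  linarith

theorem add_exitTime_smul_notMem (ho : IsOpen Ω) (hb : Bornology.IsBounded Ω) (hv : v ≠ 0) (x : E) :
    x + exitTime Ω v x • v ∉ Ω := by
  have hclosed : IsClosed {s : ℝ | 0 ≤ s ∧ x + s • v ∉ Ω} :=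
    isClosed_Ici.inter (ho.isClosed_compl.preimage (f := fun s : ℝ ↦ x + s • v) (by fun_prop))
  exact (hclosed.csInf_mem (exists_add_smul_notMem_of_isBounded hb hv x) ⟨0, fun _ h ↦ h.1⟩).2

theorem exitTime_pos (ho : IsOpen Ω) (hb : Bornology.IsBounded Ω) (hv : v ≠ 0) (hx : x ∈ Ω) :
    0 < exitTime Ω v x := by
  refine exitTime_nonneg.lt_of_ne fun h ↦ add_exitTime_smul_notMem ho hb hv x ?_
  rwa [← h, zero_smul, add_zero]

theorem add_exitTime_smul_mem_frontier (ho : IsOpen Ω) (hb : Bornology.IsBounded Ω) (hv : v ≠ 0)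
    (hx : x ∈ Ω) : x + exitTime Ω v x • v ∈ frontier Ω := by
  rw [ho.frontier_eq]
  refine ⟨?_, add_exitTime_smul_notMem ho hb hv x⟩
  have hpos := exitTime_pos ho hb hv hx
  have hlim : exitTime Ω v x ∈ closure (Ico 0 (exitTime Ω v x)) := by
    rw [closure_Ico hpos.ne]
    exact right_mem_Icc.2 hpos.le
  exact map_mem_closure (f := fun s : ℝ ↦ x + s • v) (by fun_prop) hlim
    fun s hs ↦ add_smul_mem_of_lt_exitTime hs.1 hs.2

theorem exitTime_le_diam_div_norm (ho : IsOpen Ω) (hb : Bornology.IsBounded Ω) (hv : v ≠ 0)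
    (hx : x ∈ Ω) : exitTime Ω v x ≤ diam Ω / ‖v‖ := by
  have hdist := dist_le_diam_of_mem hb.closure (subset_closure hx)
    (frontier_subset_closure (add_exitTime_smul_mem_frontier ho hb hv hx))
  rw [dist_self_add_right, norm_smul, Real.norm_of_nonneg exitTime_nonneg, diam_closure] at hdist
  rwa [le_div_iff₀ (norm_pos_iff.2 hv)]

theorem exitTime_add_smul (ho : IsOpen Ω) (hb : Bornology.IsBounded Ω) (hv : v ≠ 0) (hs : 0 ≤ s)
    (hsx : s < exitTime Ω v x) : exitTime Ω v (x + s • v) = exitTime Ω v x - s := by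
  apply le_antisymm
  · apply exitTime_le (by linarith)
    rw [add_assoc, ← add_smul, add_sub_cancel]
    exact add_exitTime_smul_notMem ho hb hv x
  · have hexit := add_exitTime_smul_notMem ho hb hv (x + s • v)
    rw [add_assoc, ← add_smul] at hexit
    exact sub_le_iff_le_add'.2 (exitTime_le (add_nonneg hs exitTime_nonneg) hexit)

theorem lowerSemicontinuous_exitTime (ho : IsOpen Ω) (hb : Bornology.IsBounded Ω) (hv : v ≠ 0) :
    LowerSemicontinuous (exitTime Ω v) := by
  rw [lowerSemicontinuous_iff_isOpen_preimage]
  intro t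
  have hpre : exitTime Ω v ⁻¹' Ioi t = {x | t < 0 ∨ ∀ s ∈ Icc 0 t, x + s • v ∈ Ω} := by
    ext x
    refine ⟨fun h ↦ .inr fun s hs ↦ add_smul_mem_of_lt_exitTime hs.1 (hs.2.trans_lt h), ?_⟩
    rintro (ht | hmem)
    · exact ht.trans_le exitTime_nonneg
    · by_contra hle
      exact add_exitTime_smul_notMem ho hb hv x (hmem _ ⟨exitTime_nonneg, not_lt.1 hle⟩)
  rw [hpre, isOpen_iff_eventually]
  rintro x (ht | hmem)
  · exact .of_forall fun _ ↦ .inl ht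
  · refine (isCompact_Icc.eventually_forall_of_forall_eventually fun s hs ↦ ?_).mono fun _ ↦ .inr
    have hcont : Continuous fun z : E × ℝ ↦ z.1 + z.2 • v := by fun_prop
    exact hcont.continuousAt.eventually_mem (ho.mem_nhds (hmem s hs))

end ExitTime

section DirectionalHardy

variable {E F : Type*} [NormedAddCommGroup E] [NormedSpace ℝ E] [NormedAddCommGroup F]
  [NormedSpace ℝ F] {Ω : Set E} {v : E} {u : E → F}

/-- The contribution of the point `y` to the Hardy bound at `y - s • v`, the point from which the
ray with velocity `v` reaches `y` after time `s`. -/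
noncomputable def hardyDensity (Ω : Set E) (v : E) (u : E → F) (y : E) (s : ℝ) : ℝ≥0∞ :=
  Ω.indicator
    (fun y ↦ hardyKernel (exitTime Ω v y + s) (exitTime Ω v y) * ‖fderiv ℝ u y v‖ₑ ^ 2) y

theorem sq_enorm_div_exitTime_le_lintegral [CompleteSpace F] (ho : IsOpen Ω)
    (hb : Bornology.IsBounded Ω) (hv : v ≠ 0) (hc : ContinuousOn u (closure Ω))
    (hd : DifferentiableOn ℝ u Ω) (h₀ : ∀ x ∈ frontier Ω, u x = 0) {x : E} (hx : x ∈ Ω) :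
    ‖u x‖ₑ ^ 2 / ENNReal.ofReal (exitTime Ω v x) ^ 2 ≤
      ∫⁻ s in Ioi 0, hardyDensity Ω v u (x + s • v) s := by
  set d := exitTime Ω v x
  have hfront : x + d • v ∈ frontier Ω := add_exitTime_smul_mem_frontier ho hb hv hx
  have hmem : ∀ s ∈ Ico 0 d, x + s • v ∈ Ω := fun s hs ↦ add_smul_mem_of_lt_exitTime hs.1 hs.2
  have hcont : ContinuousOn (fun s : ℝ ↦ u (x + s • v)) (Icc 0 d) := by
    refine hc.comp (by fun_prop) fun s hs ↦ ?_
    rcases hs.2.lt_or_eq with hlt | rfl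
    · exact subset_closure (hmem s ⟨hs.1, hlt⟩)
    · exact frontier_subset_closure hfront
  have hderiv : ∀ s ∈ Ioo 0 d,
      HasDerivAt (fun s : ℝ ↦ u (x + s • v)) (fderiv ℝ u (x + s • v) v) s := fun s hs ↦ by
    have hline : HasDerivAt (fun s : ℝ ↦ x + s • v) v s := by
      simpa using ((hasDerivAt_id s).smul_const v).const_add x
    exact (hd.differentiableAt
      (ho.mem_nhds (hmem s (Ioo_subset_Ico_self hs)))).hasFDerivAt.comp_hasDerivAt s hline
  calc ‖u x‖ₑ ^ 2 / ENNReal.ofReal d ^ 2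
      ≤ ∫⁻ s in Ioo 0 d, hardyKernel d (d - s) * ‖deriv (fun s : ℝ ↦ u (x + s • v)) s‖ₑ ^ 2 := by
        simpa using sq_enorm_div_le_lintegral_hardyKernel (exitTime_pos ho hb hv hx) hcont
          (fun s hs ↦ (hderiv s hs).differentiableAt.differentiableWithinAt) (h₀ _ hfront)
    _ = ∫⁻ s in Ioo 0 d, hardyDensity Ω v u (x + s • v) s :=
        setLIntegral_congr_fun measurableSet_Ioo fun s hs ↦ by
          rw [hardyDensity, indicator_of_mem (hmem s (Ioo_subset_Ico_self hs)),
            exitTime_add_smul ho hb hv hs.1.le hs.2, sub_add_cancel, (hderiv s hs).deriv]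
    _ ≤ ∫⁻ s in Ioi 0, hardyDensity Ω v u (x + s • v) s := lintegral_mono_set Ioo_subset_Ioi_self

variable [MeasurableSpace E] [BorelSpace E] [CompleteSpace F]

theorem measurable_uncurry_hardyDensity (ho : IsOpen Ω) (hb : Bornology.IsBounded Ω) (hv : v ≠ 0)
    (u : E → F) : Measurable (Function.uncurry (hardyDensity Ω v u)) := by
  borelize F
  have hexit : Measurable fun z : E × ℝ ↦ exitTime Ω v z.1 :=
    (lowerSemicontinuous_exitTime ho hb hv).measurable.comp measurable_fst
  have hbulk : Measurable fun z : E × ℝ ↦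
      hardyKernel (exitTime Ω v z.1 + z.2) (exitTime Ω v z.1) * ‖fderiv ℝ u z.1 v‖ₑ ^ 2 := by
    unfold hardyKernel
    fun_prop
  exact hbulk.indicator (measurable_fst ho.measurableSet)

theorem lintegral_sq_enorm_div_exitTime_le [FiniteDimensional ℝ E] (μ : Measure E)
    [μ.IsAddHaarMeasure] (ho : IsOpen Ω) (hb : Bornology.IsBounded Ω) (hv : v ≠ 0)
    (hc : ContinuousOn u (closure Ω)) (hd : DifferentiableOn ℝ u Ω)
    (h₀ : ∀ x ∈ frontier Ω, u x = 0) :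
    ∫⁻ x in Ω, ‖u x‖ₑ ^ 2 / ENNReal.ofReal (exitTime Ω v x) ^ 2 ∂μ ≤
      4 * ∫⁻ x in Ω, ‖fderiv ℝ u x v‖ₑ ^ 2 ∂μ := by
  borelize F
  have hderiv : Measurable fun x ↦ ‖fderiv ℝ u x v‖ₑ ^ 2 :=
    (measurable_fderiv_apply_const ℝ u v).enorm.pow_const 2
  have hkernel : ∀ y, ∫⁻ s in Ioi 0, hardyDensity Ω v u y s =
      Ω.indicator (fun y ↦ 4 * ‖fderiv ℝ u y v‖ₑ ^ 2) y := fun y ↦ by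
    by_cases hy : y ∈ Ω
    · simp only [hardyDensity, indicator_of_mem hy]
      rw [lintegral_mul_const _ (by unfold hardyKernel; fun_prop),
        lintegral_hardyKernel_add (exitTime_pos ho hb hv hy)]
    · simp [hardyDensity, hy]
  calc ∫⁻ x in Ω, ‖u x‖ₑ ^ 2 / ENNReal.ofReal (exitTime Ω v x) ^ 2 ∂μ
      ≤ ∫⁻ x in Ω, (∫⁻ s in Ioi 0, hardyDensity Ω v u (x + s • v) s) ∂μ :=
        setLIntegral_mono' ho.measurableSet fun x hx ↦
          sq_enorm_div_exitTime_le_lintegral ho hb hv hc hd h₀ hx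
    _ ≤ ∫⁻ x, (∫⁻ s in Ioi 0, hardyDensity Ω v u (x + s • v) s) ∂μ := setLIntegral_le_lintegral _ _
    _ = ∫⁻ y, (∫⁻ s in Ioi 0, hardyDensity Ω v u y s) ∂μ :=
        lintegral_lintegral_add_smul μ _ v (measurable_uncurry_hardyDensity ho hb hv u)
    _ = 4 * ∫⁻ x in Ω, ‖fderiv ℝ u x v‖ₑ ^ 2 ∂μ := by
        simp only [hkernel]
        rw [lintegral_indicator ho.measurableSet, lintegral_const_mul _ hderiv]

end DirectionalHardy

section FiniteEscape

/-- Finitely many nonzero velocities suffice to leave `Ω`, from each of its points `x`, within a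
time controlled by the distance from `x` to any given point `p` of `A`; which velocity is used may
depend on `x` and `p`. Here `A` is thought of as a part of the boundary of `Ω`. -/
def HasFiniteEscape {E : Type*} [NormedAddCommGroup E] [NormedSpace ℝ E] (Ω A : Set E) : Prop :=
  ∃ V : Finset E, 0 ∉ V ∧ ∃ C : ℝ≥0, ∀ x ∈ Ω, ∀ p ∈ A, ∃ v ∈ V, exitTime Ω v x ≤ C * dist x p

variable {E : Type*} [NormedAddCommGroup E] [NormedSpace ℝ E] {Ω A B P K : Set E}

theorem hasFiniteEscape_empty : HasFiniteEscape Ω ∅ :=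
  ⟨∅, Finset.notMem_empty 0, 0, fun _ _ _ ↦ False.elim⟩

theorem HasFiniteEscape.mono (h : HasFiniteEscape Ω B) (hAB : A ⊆ B) : HasFiniteEscape Ω A :=
  let ⟨V, hV, C, hC⟩ := h
  ⟨V, hV, C, fun x hx p hp ↦ hC x hx p (hAB hp)⟩

theorem HasFiniteEscape.union (hA : HasFiniteEscape Ω A) (hB : HasFiniteEscape Ω B) :
    HasFiniteEscape Ω (A ∪ B) := by
  classical
  obtain ⟨V, hV, C, hC⟩ := hA
  obtain ⟨W, hW, D, hD⟩ := hB
  refine ⟨V ∪ W, by simp [hV, hW], max C D, fun x hx p hp ↦ ?_⟩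
  rcases hp with hp | hp
  · obtain ⟨v, hv, hle⟩ := hC x hx p hp
    exact ⟨v, Finset.mem_union_left _ hv, hle.trans (by gcongr; exact le_max_left C D)⟩
  · obtain ⟨v, hv, hle⟩ := hD x hx p hp
    exact ⟨v, Finset.mem_union_right _ hv, hle.trans (by gcongr; exact le_max_right C D)⟩

theorem hasFiniteEscape_iUnion {ι : Type*} [Finite ι] {A : ι → Set E}
    (h : ∀ i, HasFiniteEscape Ω (A i)) : HasFiniteEscape Ω (⋃ i, A i) := by
  rw [← biUnion_univ]
  refine Set.finite_univ.induction_on_subset (motive := fun s _ ↦ HasFiniteEscape Ω (⋃ i ∈ s, A i))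
    _ (by simpa using hasFiniteEscape_empty) fun {i s} _ _ _ hs ↦ ?_
  rw [biUnion_insert]
  exact (h i).union hs

theorem exitTime_sub_le_of_mem_closure (hP : Convex ℝ P) (hPΩ : Disjoint P Ω) {x z p q : E} {r : ℝ}
    (hz : ball z r ⊆ P) (hp : p ∈ closure P) (hpq : p ∈ ball q (r / 2)) (hxp : 0 < dist x p)
    (hxpr : dist x p ≤ r / 2) : exitTime Ω (z - q) x ≤ 2 / r * dist x p := by
  have hr : 0 < r := by linarith
  set s := 2 / r * dist x p with hs
  have hs₀ : 0 < s := by positivity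
  have hs₁ : s ≤ 1 := by
    calc s ≤ 2 / r * (r / 2) := by rw [hs]; gcongr
      _ = 1 := by field_simp
  set w := z + ((p - q) + s⁻¹ • (x - p)) with hw
  have hwz : w ∈ ball z r := by
    rw [mem_ball, hw, dist_self_add_left]
    calc ‖(p - q) + s⁻¹ • (x - p)‖ ≤ ‖p - q‖ + ‖s⁻¹ • (x - p)‖ := norm_add_le _ _
      _ = dist p q + r / 2 := by
          rw [norm_smul, Real.norm_of_nonneg (inv_nonneg.2 hs₀.le), ← dist_eq_norm, ← dist_eq_norm,
            hs]
          field_simp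
      _ < r := by linarith [mem_ball.1 hpq]
  have hcombo : x + s • (z - q) = (1 - s) • p + s • w := by
    rw [hw, smul_add s z, smul_add s (p - q), smul_inv_smul₀ hs₀.ne']
    module
  have hmem : x + s • (z - q) ∈ P := by
    rw [hcombo]
    exact interior_subset (hP.combo_closure_interior_mem_interior hp
      (interior_maximal hz isOpen_ball hwz) (sub_nonneg.2 hs₁) hs₀ (sub_add_cancel 1 s))
  exact exitTime_le hs₀.le (hPΩ.notMem_of_mem_left hmem)

theorem hasFiniteEscape_closure_inter_ball (ho : IsOpen Ω) (hb : Bornology.IsBounded Ω)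
    (hP : Convex ℝ P) (hPΩ : Disjoint P Ω) {z q : E} {r : ℝ} (hr : 0 < r) (hz : ball z r ⊆ P)
    (hq : q ∈ closure Ω) : HasFiniteEscape Ω (closure P ∩ ball q (r / 2)) := by
  have hzq : z - q ≠ 0 := fun h ↦ ((hPΩ.mono_left hz).closure_right isOpen_ball).notMem_of_mem_left
    (mem_ball_self hr) (sub_eq_zero.1 h ▸ hq)
  refine ⟨{z - q}, by simpa using hzq.symm,
    .mk (max 1 (diam Ω / ‖z - q‖) * (2 / r)) (by positivity), fun x hx p hp ↦
      ⟨z - q, Finset.mem_singleton_self _, ?_⟩⟩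
  rw [NNReal.coe_mk, mul_assoc]
  have hxp : 0 < dist x p := dist_pos.2 fun h ↦
    (hPΩ.closure_left ho).notMem_of_mem_left hp.1 (h ▸ hx)
  rcases le_total (dist x p) (r / 2) with hnear | hfar
  · calc exitTime Ω (z - q) x
        ≤ 2 / r * dist x p := exitTime_sub_le_of_mem_closure hP hPΩ hz hp.1 hp.2 hxp hnear
      _ ≤ max 1 (diam Ω / ‖z - q‖) * (2 / r * dist x p) :=
          le_mul_of_one_le_left (by positivity) (le_max_left _ _)
  · calc exitTime Ω (z - q) x ≤ diam Ω / ‖z - q‖ := exitTime_le_diam_div_norm ho hb hzq hx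
      _ = diam Ω / ‖z - q‖ * (2 / r * (r / 2)) := by field_simp
      _ ≤ max 1 (diam Ω / ‖z - q‖) * (2 / r * dist x p) := by
          gcongr
          exact le_max_right _ _

theorem hasFiniteEscape_closure_inter_of_isCompact (ho : IsOpen Ω) (hb : Bornology.IsBounded Ω)
    (hPo : IsOpen P) (hP : Convex ℝ P) (hPΩ : Disjoint P Ω) (hK : IsCompact K)
    (hKΩ : K ⊆ closure Ω) : HasFiniteEscape Ω (closure P ∩ K) := by
  rcases P.eq_empty_or_nonempty with rfl | ⟨z, hz⟩
  · simpa using hasFiniteEscape_empty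
  obtain ⟨r, hr, hball⟩ := isOpen_iff.1 hPo z hz
  refine hK.induction_on (p := fun K ↦ HasFiniteEscape Ω (closure P ∩ K))
    (by simpa using hasFiniteEscape_empty) (fun s t hst ht ↦ ht.mono (by gcongr))
    (fun s t hs ht ↦ inter_union_distrib_left _ s t ▸ hs.union ht) fun q hq ↦
      ⟨ball q (r / 2), mem_nhdsWithin_of_mem_nhds (ball_mem_nhds q (half_pos hr)),
        hasFiniteEscape_closure_inter_ball ho hb hP hPΩ hr hball (hKΩ hq)⟩

end FiniteEscape

section HyperplaneArrangement

/-- The cell of the arrangement of hyperplanes `f i = c i` lying on the negative side of the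
hyperplanes with index in `A` and on the positive side of the others. -/
def arrangementCell {ι E : Type*} [NormedAddCommGroup E] [NormedSpace ℝ E]
    (f : ι → StrongDual ℝ E) (c : ι → ℝ) (A : Set ι) : Set E :=
  {x | (∀ i ∈ A, f i x < c i) ∧ ∀ i ∉ A, c i < f i x}

variable {ι E : Type*} [NormedAddCommGroup E] [NormedSpace ℝ E] {f : ι → StrongDual ℝ E}
  {c : ι → ℝ} {A : Set ι} {Ω : Set E}

theorem arrangementCell_eq_iInter : arrangementCell f c A =
    (⋂ i ∈ A, {x | f i x < c i}) ∩ ⋂ i ∈ Aᶜ, {x | c i < f i x} := by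
  ext
  simp [arrangementCell]

theorem convex_arrangementCell : Convex ℝ (arrangementCell f c A) := by
  rw [arrangementCell_eq_iInter]
  exact (convex_iInter₂ fun i _ ↦ convex_halfSpace_lt (f i).isLinear (c i)).inter
    (convex_iInter₂ fun i _ ↦ convex_halfSpace_gt (f i).isLinear (c i))

theorem isOpen_arrangementCell [Finite ι] : IsOpen (arrangementCell f c A) := by
  rw [arrangementCell_eq_iInter]
  exact (A.toFinite.isOpen_biInter fun i _ ↦ isOpen_lt (f i).continuous continuous_const).inter
    (Aᶜ.toFinite.isOpen_biInter fun i _ ↦ isOpen_lt continuous_const (f i).continuous)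

theorem ne_of_mem_arrangementCell {x : E} (hx : x ∈ arrangementCell f c A) (i : ι) :
    f i x ≠ c i := by
  by_cases hi : i ∈ A
  · exact (hx.1 i hi).ne
  · exact (hx.2 i hi).ne'

theorem mem_arrangementCell_setOf_lt {x : E} (hx : ∀ i, f i x ≠ c i) :
    x ∈ arrangementCell f c {i | f i x < c i} :=
  ⟨fun _ hi ↦ hi, fun i hi ↦ (hx i).lt_or_gt.resolve_left hi⟩

theorem dense_setOf_forall_ne [Finite ι] (hf : ∀ i, f i ≠ 0) (c : ι → ℝ) :
    Dense {x | ∀ i, f i x ≠ c i} := by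
  have hpre : {x | ∀ i, f i x ≠ c i} = ⋂₀ range fun i ↦ f i ⁻¹' {c i}ᶜ := by
    ext
    simp
  rw [hpre]
  exact (finite_range _).dense_sInter
    (forall_mem_range.2 fun i ↦ isOpen_compl_singleton.preimage (f i).continuous)
    (forall_mem_range.2 fun i ↦
      (dense_compl_singleton (c i)).preimage ((f i).isOpenMap_of_ne_zero (hf i)))

theorem arrangementCell_subset_of_not_disjoint (ho : IsOpen Ω)
    (hΩ : frontier Ω ⊆ ⋃ i, {x | f i x = c i}) (hA : ¬Disjoint (arrangementCell f c A) Ω) :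
    arrangementCell f c A ⊆ Ω := by
  refine convex_arrangementCell.isPreconnected.subset_left_of_subset_union ho
    isClosed_closure.isOpen_compl (disjoint_compl_right.mono_left subset_closure) (fun x hx ↦ ?_)
    (not_disjoint_iff_nonempty_inter.1 hA)
  by_contra! hmem
  simp only [mem_union, mem_compl_iff, not_or, not_not] at hmem
  obtain ⟨i, hi⟩ := mem_iUnion.1 (hΩ (ho.frontier_eq.ge ⟨hmem.2, hmem.1⟩))
  exact ne_of_mem_arrangementCell hx i hi

theorem frontier_subset_iUnion_closure_arrangementCell [Finite ι] (hf : ∀ i, f i ≠ 0)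
    (ho : IsOpen Ω) (hcl : frontier Ω = frontier (closure Ω))
    (hΩ : frontier Ω ⊆ ⋃ i, {x | f i x = c i}) :
    frontier Ω ⊆
      ⋃ A : {A // Disjoint (arrangementCell f c A) Ω}, closure (arrangementCell f c A) := by
  have hgeneric : (closure Ω)ᶜ ∩ {x | ∀ i, f i x ≠ c i} ⊆
      ⋃ A : {A // Disjoint (arrangementCell f c A) Ω}, arrangementCell f c A := by
    rintro x ⟨hxΩ, hx⟩
    refine mem_iUnion.2 ⟨⟨{i | f i x < c i}, ?_⟩, mem_arrangementCell_setOf_lt hx⟩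
    by_contra hmeet
    exact hxΩ (subset_closure (arrangementCell_subset_of_not_disjoint ho hΩ hmeet
      (mem_arrangementCell_setOf_lt hx)))
  calc frontier Ω ⊆ closure (closure Ω)ᶜ := by
        rw [hcl, ← frontier_compl]
        exact frontier_subset_closure
    _ ⊆ closure ((closure Ω)ᶜ ∩ {x | ∀ i, f i x ≠ c i}) :=
        closure_minimal ((dense_setOf_forall_ne hf c).open_subset_closure_inter
          isClosed_closure.isOpen_compl) isClosed_closure
    _ ⊆ closure (⋃ A : {A // Disjoint (arrangementCell f c A) Ω}, arrangementCell f c A) :=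
        closure_mono hgeneric
    _ = ⋃ A : {A // Disjoint (arrangementCell f c A) Ω}, closure (arrangementCell f c A) :=
        closure_iUnion_of_finite _

theorem hasFiniteEscape_frontier [ProperSpace E] [Finite ι] (hf : ∀ i, f i ≠ 0) (ho : IsOpen Ω)
    (hb : Bornology.IsBounded Ω) (hcl : frontier Ω = frontier (closure Ω))
    (hΩ : frontier Ω ⊆ ⋃ i, {x | f i x = c i}) : HasFiniteEscape Ω (frontier Ω) := by
  have hcompact : IsCompact (frontier Ω) :=
    isCompact_of_isClosed_isBounded isClosed_frontier (hb.closure.subset frontier_subset_closure)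
  have hcells : HasFiniteEscape Ω (⋃ A : {A // Disjoint (arrangementCell f c A) Ω},
      closure (arrangementCell f c A) ∩ frontier Ω) :=
    hasFiniteEscape_iUnion fun A ↦ hasFiniteEscape_closure_inter_of_isCompact ho hb
      isOpen_arrangementCell convex_arrangementCell A.2 hcompact frontier_subset_closure
  refine hcells.mono ?_
  rw [← iUnion_inter]
  exact subset_inter (frontier_subset_iUnion_closure_arrangementCell hf ho hcl hΩ) Subset.rfl

end HyperplaneArrangement

section FiniteEscapeHardy

theorem exists_ofReal_exitTime_le_mul_infEDist {E : Type*} [NormedAddCommGroup E] [NormedSpace ℝ E]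
    {Ω A : Set E} {V : Finset E} {C : ℝ≥0} {x : E} (hA : A.Nonempty)
    (h : ∀ p ∈ A, ∃ v ∈ V, exitTime Ω v x ≤ C * dist x p) :
    ∃ v ∈ V, ENNReal.ofReal (exitTime Ω v x) ≤ C * infEDist x A := by
  have hV : V.Nonempty :=
    let ⟨_, hp⟩ := hA
    let ⟨v, hv, _⟩ := h _ hp
    ⟨v, hv⟩
  obtain ⟨w, hw, hmin⟩ := V.exists_min_image (fun v ↦ exitTime Ω v x) hV
  refine ⟨w, hw, ?_⟩
  have := hA.to_subtype
  rw [infEDist, iInf_subtype', ENNReal.mul_iInf (by simp)]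
  refine le_iInf fun ⟨p, hp⟩ ↦ ?_
  obtain ⟨v, hv, hle⟩ := h p hp
  calc ENNReal.ofReal (exitTime Ω w x) ≤ ENNReal.ofReal (C * dist x p) :=
        ENNReal.ofReal_le_ofReal ((hmin v hv).trans hle)
    _ = C * edist x p := by
        rw [ENNReal.ofReal_mul C.coe_nonneg, ENNReal.ofReal_coe_nnreal, edist_dist]

theorem div_sq_le_mul_div_sq {a b c d : ℝ≥0∞} (hb₀ : b ≠ 0) (hb : b ≠ ∞) (h : b ≤ c * d) :
    a / d ^ 2 ≤ c ^ 2 * (a / b ^ 2) := by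
  refine ENNReal.div_le_of_le_mul ?_
  calc a = a / b ^ 2 * b ^ 2 := (ENNReal.div_mul_cancel (by simpa) (by finiteness)).symm
    _ ≤ a / b ^ 2 * (c * d) ^ 2 := by gcongr
    _ = c ^ 2 * (a / b ^ 2) * d ^ 2 := by ring

theorem div_infEDist_sq_le_sum {E : Type*} [NormedAddCommGroup E] [NormedSpace ℝ E]
    {Ω A : Set E} {V : Finset E} {C : ℝ≥0} {x : E} (hpos : ∀ v ∈ V, 0 < exitTime Ω v x)
    (h : ∀ p ∈ A, ∃ v ∈ V, exitTime Ω v x ≤ C * dist x p) (a : ℝ≥0∞) :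
    a / infEDist x A ^ 2 ≤ ∑ v ∈ V, C ^ 2 * (a / ENNReal.ofReal (exitTime Ω v x) ^ 2) := by
  rcases A.eq_empty_or_nonempty with rfl | hA
  · simp
  obtain ⟨v, hv, hle⟩ := exists_ofReal_exitTime_le_mul_infEDist hA h
  calc a / infEDist x A ^ 2 ≤ C ^ 2 * (a / ENNReal.ofReal (exitTime Ω v x) ^ 2) :=
        div_sq_le_mul_div_sq (ENNReal.ofReal_pos.2 (hpos v hv)).ne' ENNReal.ofReal_ne_top hle
    _ ≤ ∑ v ∈ V, C ^ 2 * (a / ENNReal.ofReal (exitTime Ω v x) ^ 2) :=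
        Finset.single_le_sum_of_canonicallyOrdered
          (f := fun v ↦ C ^ 2 * (a / ENNReal.ofReal (exitTime Ω v x) ^ 2)) hv

theorem lintegral_sq_enorm_apply_le {α 𝕜 E F : Type*} [MeasurableSpace α]
    [NontriviallyNormedField 𝕜] [SeminormedAddCommGroup E] [NormedSpace 𝕜 E]
    [SeminormedAddCommGroup F] [NormedSpace 𝕜 F] (μ : Measure α) (T : α → E →L[𝕜] F) (v : E) :
    ∫⁻ x, ‖T x v‖ₑ ^ 2 ∂μ ≤ ‖v‖ₑ ^ 2 * ∫⁻ x, ‖T x‖ₑ ^ 2 ∂μ := by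
  rw [← lintegral_const_mul' _ _ (by finiteness)]
  gcongr with x
  rw [← mul_pow, mul_comm]
  gcongr
  exact (T x).le_opENorm v

variable {E F : Type*} [NormedAddCommGroup E] [NormedSpace ℝ E] [FiniteDimensional ℝ E]
  [MeasurableSpace E] [BorelSpace E] [NormedAddCommGroup F] [NormedSpace ℝ F] [CompleteSpace F]
  {Ω A : Set E} (μ : Measure E) [μ.IsAddHaarMeasure]

theorem HasFiniteEscape.exists_lintegral_sq_enorm_div_infEDist_le (h : HasFiniteEscape Ω A)
    (ho : IsOpen Ω) (hb : Bornology.IsBounded Ω) : ∃ K : ℝ≥0, ∀ u : E → F,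
      ContinuousOn u (closure Ω) → DifferentiableOn ℝ u Ω → (∀ x ∈ frontier Ω, u x = 0) →
      ∫⁻ x in Ω, ‖u x‖ₑ ^ 2 / infEDist x A ^ 2 ∂μ ≤ K * ∫⁻ x in Ω, ‖fderiv ℝ u x‖ₑ ^ 2 ∂μ := by
  obtain ⟨V, hV, C, hC⟩ := h
  have hV₀ : ∀ v ∈ V, v ≠ 0 := fun v hv h ↦ hV (h ▸ hv)
  refine ⟨∑ v ∈ V, C ^ 2 * (4 * ‖v‖₊ ^ 2), fun u hc hd h₀ ↦ ?_⟩
  have hmeas : ∀ v ∈ V, AEMeasurable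
      (fun x ↦ ‖u x‖ₑ ^ 2 / ENNReal.ofReal (exitTime Ω v x) ^ 2) (μ.restrict Ω) := fun v hv ↦
    ((hd.continuousOn.aestronglyMeasurable ho.measurableSet).enorm.pow_const 2).div
      ((lowerSemicontinuous_exitTime ho hb
        (hV₀ v hv)).measurable.ennreal_ofReal.pow_const 2).aemeasurable
  have hdirection : ∀ v ∈ V, ∫⁻ x in Ω, ‖u x‖ₑ ^ 2 / ENNReal.ofReal (exitTime Ω v x) ^ 2 ∂μ ≤
      4 * (‖v‖ₑ ^ 2 * ∫⁻ x in Ω, ‖fderiv ℝ u x‖ₑ ^ 2 ∂μ) := fun v hv ↦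
    (lintegral_sq_enorm_div_exitTime_le μ ho hb (hV₀ v hv) hc hd h₀).trans
      (by gcongr; exact lintegral_sq_enorm_apply_le _ _ _)
  calc ∫⁻ x in Ω, ‖u x‖ₑ ^ 2 / infEDist x A ^ 2 ∂μ
      ≤ ∫⁻ x in Ω, ∑ v ∈ V, C ^ 2 * (‖u x‖ₑ ^ 2 / ENNReal.ofReal (exitTime Ω v x) ^ 2) ∂μ :=
        setLIntegral_mono' ho.measurableSet fun x hx ↦
          div_infEDist_sq_le_sum (fun v hv ↦ exitTime_pos ho hb (hV₀ v hv) hx) (hC x hx) _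
    _ = ∑ v ∈ V, C ^ 2 * ∫⁻ x in Ω, ‖u x‖ₑ ^ 2 / ENNReal.ofReal (exitTime Ω v x) ^ 2 ∂μ := by
        rw [lintegral_finsetSum' _ fun v hv ↦ (hmeas v hv).const_mul _]
        exact Finset.sum_congr rfl fun v _ ↦ lintegral_const_mul' _ _ (by finiteness)
    _ ≤ ∑ v ∈ V, C ^ 2 * (4 * (‖v‖ₑ ^ 2 * ∫⁻ x in Ω, ‖fderiv ℝ u x‖ₑ ^ 2 ∂μ)) := by
        gcongr with v hv
        exact hdirection v hv
    _ = (∑ v ∈ V, C ^ 2 * (4 * ‖v‖₊ ^ 2) : ℝ≥0) * ∫⁻ x in Ω, ‖fderiv ℝ u x‖ₑ ^ 2 ∂μ := by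
        push_cast
        simp only [← mul_assoc, Finset.sum_mul, enorm_eq_nnnorm]

theorem hardy_poincare_polyhedral_general {ι : Type*} [Finite ι] {f : ι → StrongDual ℝ E}
    {c : ι → ℝ} (hf : ∀ i, f i ≠ 0) (ho : IsOpen Ω) (hb : Bornology.IsBounded Ω)
    (hcl : frontier Ω = frontier (closure Ω)) (hΩ : frontier Ω ⊆ ⋃ i, {x | f i x = c i}) :
    ∃ κ : ℝ, 0 < κ ∧ ∀ u : E → F,
      ContinuousOn u (closure Ω) → DifferentiableOn ℝ u Ω → (∀ x ∈ frontier Ω, u x = 0) →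
      (∫⁻ x in Ω, ‖u x‖ₑ ^ 2 / infEDist x (frontier Ω) ^ 2 ∂μ) +
          (∫⁻ x in Ω, ‖fderiv ℝ u x‖ₑ ^ 2 ∂μ) ≤
        ENNReal.ofReal κ * ∫⁻ x in Ω, ‖fderiv ℝ u x‖ₑ ^ 2 ∂μ := by
  have := FiniteDimensional.proper_real E
  obtain ⟨K, hK⟩ := (hasFiniteEscape_frontier hf ho hb hcl
    hΩ).exists_lintegral_sq_enorm_div_infEDist_le (F := F) μ ho hb
  refine ⟨K + 1, by positivity, fun u hc hd h₀ ↦ ?_⟩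
  rw [ENNReal.ofReal_add K.coe_nonneg zero_le_one, ENNReal.ofReal_coe_nnreal, ENNReal.ofReal_one,
    add_mul, one_mul]
  gcongr
  exact hK u hc hd h₀

end FiniteEscapeHardy

section Euclidean

theorem ofReal_sq_div_infDist_sq_le_of_subset {E : Type*} [PseudoMetricSpace E] {S T : Set E}
    (hST : S ⊆ T) (a : ℝ) (x : E) :
    ENNReal.ofReal (a ^ 2 / infDist x S ^ 2) ≤ ‖a‖ₑ ^ 2 / infEDist x T ^ 2 := by
  rcases (infDist_nonneg (x := x) (s := S)).eq_or_lt' with h₀ | hpos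
  · simp [h₀]
  have hfin : infEDist x S ≠ ∞ := fun h ↦ hpos.ne' (by rw [infDist, h, ENNReal.toReal_top])
  calc ENNReal.ofReal (a ^ 2 / infDist x S ^ 2) = ‖a‖ₑ ^ 2 / infEDist x S ^ 2 := by
        rw [ENNReal.ofReal_div_of_pos (by positivity), ENNReal.ofReal_pow hpos.le, ← sq_abs,
          ENNReal.ofReal_pow (abs_nonneg a), ← Real.enorm_eq_ofReal_abs, infDist,
          ENNReal.ofReal_toReal hfin]
    _ ≤ ‖a‖ₑ ^ 2 / infEDist x T ^ 2 := by gcongr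

theorem ofReal_norm_gradient {E : Type*} [NormedAddCommGroup E] [InnerProductSpace ℝ E]
    [CompleteSpace E] (u : E → ℝ) (x : E) : ENNReal.ofReal ‖gradient u x‖ = ‖fderiv ℝ u x‖ₑ := by
  rw [gradient, LinearIsometryEquiv.norm_map, ofReal_norm]

variable {n : ℕ} {Ω : Set (EuclideanSpace ℝ (Fin n))}
  {𝓗 : Finset (Set (EuclideanSpace ℝ (Fin n)))}

theorem polySingularSet_subset_frontier : polySingularSet Ω 𝓗 ⊆ frontier Ω :=
  fun _ hx ↦ hx.1

theorem IsAffineHyperplane.exists_strongDual {H : Set (EuclideanSpace ℝ (Fin n))}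
    (hH : IsAffineHyperplane H) :
    ∃ (f : StrongDual ℝ (EuclideanSpace ℝ (Fin n))) (c : ℝ), f ≠ 0 ∧ H = {x | f x = c} :=
  let ⟨v, c, hv, hHv⟩ := hH
  ⟨innerSL ℝ v, c, fun h ↦ hv (by simpa using congr($h v)), hHv⟩

theorem IsPolyhedralDomain.exists_strongDual (hΩ : IsPolyhedralDomain Ω 𝓗) :
    ∃ (f : 𝓗 → StrongDual ℝ (EuclideanSpace ℝ (Fin n))) (c : 𝓗 → ℝ),
      (∀ H, f H ≠ 0) ∧ frontier Ω ⊆ ⋃ H, {x | f H x = c H} := by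
  choose f c hf hH using fun H : 𝓗 ↦ (hΩ.hyperplane H H.2).exists_strongDual
  refine ⟨f, c, hf, hΩ.subset_union.trans ?_⟩
  simp only [← hH, iUnion_subtype, Subset.rfl]

end Euclidean

/-- Hardy–Poincaré inequality on a bounded polyhedral domain. -/
theorem hardy_poincare_polyhedral {n : ℕ} (hn : 2 ≤ n)
    (Ω : Set (EuclideanSpace ℝ (Fin n))) (𝓗 : Finset (Set (EuclideanSpace ℝ (Fin n))))
    (hΩ : IsPolyhedralDomain Ω 𝓗) (hS : (polySingularSet Ω 𝓗).Nonempty) :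
    ∃ κ : ℝ, 0 < κ ∧ ∀ u : EuclideanSpace ℝ (Fin n) → ℝ,
      ContinuousOn u (closure Ω) → ContDiffOn ℝ 1 u Ω →
      (∀ x ∈ frontier Ω, u x = 0) →
      (∫⁻ x in Ω, ENNReal.ofReal (u x ^ 2 / infDist x (polySingularSet Ω 𝓗) ^ 2)) +
          (∫⁻ x in Ω, ENNReal.ofReal (‖gradient u x‖ ^ 2)) ≤
        ENNReal.ofReal κ * ∫⁻ x in Ω, ENNReal.ofReal (‖gradient u x‖ ^ 2) := by
  obtain ⟨f, c, hf, hsub⟩ := hΩ.exists_strongDual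
  obtain ⟨κ, hκ, hineq⟩ := hardy_poincare_polyhedral_general (F := ℝ) volume hf hΩ.isOpen
    hΩ.isBounded hΩ.frontier_closure hsub
  refine ⟨κ, hκ, fun u hc hd h₀ ↦ ?_⟩
  simp only [ENNReal.ofReal_pow (norm_nonneg _), ofReal_norm_gradient]
  refine le_trans ?_ (hineq u hc (hd.differentiableOn one_ne_zero) h₀)
  gcongr with x
  exact ofReal_sq_div_infDist_sq_le_of_subset polySingularSet_subset_frontier _ _
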